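/- Let A ∈ ℝ^{n×n} be nonsingular and 1 ≤ k ≤ d(A) − 1. If b ∈ ℝ^n is a unit norm k-th worst-case GMRES initial vector, r_k = GMRES(A, b, k), and s_k = GMRES(Aᵀ, r_k/‖r_k‖, k), then ‖s_k‖ = ‖r_k‖ = Ψ_k(A) and b = s_k / Ψ_k(A). -/

import Mathlib

open Polynomial Matrix

/-- The Euclidean norm of a real vector. -/
noncomputable def euclNorm {ι : Type*} [Fintype ι] (v : ι → ℝ) : ℝ :=
  Real.sqrt (∑ i, v i ^ 2)

/-- The Euclidean norm of a complex vector. -/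
noncomputable def euclNormC {ι : Type*} [Fintype ι] (v : ι → ℂ) : ℝ :=
  Real.sqrt (∑ i, ‖v i‖ ^ 2)

/-- The Euclidean inner product of two real vectors. -/
noncomputable def edot {ι : Type*} [Fintype ι] (u v : ι → ℝ) : ℝ := ∑ i, u i * v i

/-- `p ∈ π_k`: real polynomials of degree at most `k` with value `1` at the origin. -/
def IsPik (k : ℕ) (p : Polynomial ℝ) : Prop := p.natDegree ≤ k ∧ p.eval 0 = 1

/-- `p ∈ π_{k,ℂ}`: complex polynomials of degree at most `k` with value `1` at the origin. -/
def IsPikC (k : ℕ) (p : Polynomial ℂ) : Prop := p.natDegree ≤ k ∧ p.eval 0 = 1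

/-- The `k`-th GMRES residual norm `min_{p ∈ π_k} ‖p(A)v‖`. -/
noncomputable def gmresVal {ι : Type*} [Fintype ι] [DecidableEq ι]
    (A : Matrix ι ι ℝ) (k : ℕ) (v : ι → ℝ) : ℝ :=
  sInf {s : ℝ | ∃ p : Polynomial ℝ, IsPik k p ∧ s = euclNorm ((Polynomial.aeval A p).mulVec v)}

/-- The `k`-th worst-case GMRES approximation `Ψ_k(A) = max_{‖v‖=1} min_{p ∈ π_k} ‖p(A)v‖`. -/
noncomputable def Psi {ι : Type*} [Fintype ι] [DecidableEq ι]
    (A : Matrix ι ι ℝ) (k : ℕ) : ℝ :=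
  sSup {r : ℝ | ∃ v : ι → ℝ, euclNorm v = 1 ∧ r = gmresVal A k v}

/-- `d(A)`: the degree of the minimal polynomial of `A`. -/
noncomputable def dA {ι : Type*} [Fintype ι] [DecidableEq ι] (A : Matrix ι ι ℝ) : ℕ :=
  (minpoly ℝ A).natDegree

/-- `d(A,b)`: the smallest degree of a nonzero polynomial `q` with `q(A)b = 0`. -/
noncomputable def dAb {ι : Type*} [Fintype ι] [DecidableEq ι]
    (A : Matrix ι ι ℝ) (b : ι → ℝ) : ℕ :=
  sInf {d : ℕ | ∃ q : Polynomial ℝ, q ≠ 0 ∧ q.natDegree = d ∧ (Polynomial.aeval A q).mulVec b = 0}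

/-- `r = GMRES(A,b,k)`: `r = p(A)b` for some `p ∈ π_k` minimizing `‖p(A)b‖` over `π_k`. -/
def IsGmresRes {ι : Type*} [Fintype ι] [DecidableEq ι]
    (A : Matrix ι ι ℝ) (k : ℕ) (b r : ι → ℝ) : Prop :=
  ∃ p : Polynomial ℝ, IsPik k p ∧ r = (Polynomial.aeval A p).mulVec b ∧
    ∀ q : Polynomial ℝ, IsPik k q → euclNorm r ≤ euclNorm ((Polynomial.aeval A q).mulVec b)

/-- `p` is the `k`-th GMRES polynomial of `A` and `b`: `p ∈ π_k` minimizes `‖p(A)b‖`. -/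
def IsGmresPoly {ι : Type*} [Fintype ι] [DecidableEq ι]
    (A : Matrix ι ι ℝ) (k : ℕ) (b : ι → ℝ) (p : Polynomial ℝ) : Prop :=
  IsPik k p ∧ ∀ q : Polynomial ℝ, IsPik k q →
    euclNorm ((Polynomial.aeval A p).mulVec b) ≤ euclNorm ((Polynomial.aeval A q).mulVec b)

/-- The Krylov subspace `K_k(A,b) = span{b, Ab, …, A^{k-1}b}`. -/
noncomputable def krylov {ι : Type*} [Fintype ι] [DecidableEq ι]
    (A : Matrix ι ι ℝ) (k : ℕ) (b : ι → ℝ) : Submodule ℝ (ι → ℝ) :=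
  Submodule.span ℝ (Set.range fun i : Fin k => (A ^ (i : ℕ)).mulVec b)

/-- `b` satisfies the cross equality for `A` and step `k`. -/
def CrossEq {ι : Type*} [Fintype ι] [DecidableEq ι]
    (A : Matrix ι ι ℝ) (k : ℕ) (b : ι → ℝ) : Prop :=
  ∀ r s : ι → ℝ, IsGmresRes A k b r → IsGmresRes Aᵀ k ((euclNorm r)⁻¹ • r) s →
    b = (euclNorm s)⁻¹ • s

/-- The Krylov matrix `K(v) = [Av, A²v, …, A^k v]`. -/
noncomputable def Kmat {n : ℕ} (A : Matrix (Fin n) (Fin n) ℝ) (k : ℕ) (v : Fin n → ℝ) :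
    Matrix (Fin n) (Fin k) ℝ :=
  Matrix.of fun i j => (A ^ ((j : ℕ) + 1)).mulVec v i

/-- `γ(v) = (K(v)ᵀK(v))⁻¹ K(v)ᵀ v`. -/
noncomputable def gammaVec {n : ℕ} (A : Matrix (Fin n) (Fin n) ℝ) (k : ℕ) (v : Fin n → ℝ) :
    Fin k → ℝ :=
  ((Kmat A k v)ᵀ * Kmat A k v)⁻¹ *ᵥ ((Kmat A k v)ᵀ *ᵥ v)

/-- `g(v) = min_{c ∈ ℝ^k} ‖v - K(v)c‖²`. -/
noncomputable def gFun {n : ℕ} (A : Matrix (Fin n) (Fin n) ℝ) (k : ℕ) (v : Fin n → ℝ) : ℝ :=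
  sInf {s : ℝ | ∃ c : Fin k → ℝ, s = euclNorm (v - Kmat A k v *ᵥ c) ^ 2}

/-- `p(z; c) = 1 - ∑_{j=1}^k c_j z^j`. -/
noncomputable def pPoly {k : ℕ} (c : Fin k → ℝ) : Polynomial ℝ :=
  1 - ∑ j : Fin k, Polynomial.C (c j) * Polynomial.X ^ ((j : ℕ) + 1)

/-- `f(c,v) = ‖p(A;c)v‖²`. -/
noncomputable def fFun {n k : ℕ} (A : Matrix (Fin n) (Fin n) ℝ) (c : Fin k → ℝ)
    (v : Fin n → ℝ) : ℝ :=
  euclNorm ((Polynomial.aeval A (pPoly c)).mulVec v) ^ 2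

/-- `F(c,v) = f(c,v)/(vᵀv)`. -/
noncomputable def FFun {n k : ℕ} (A : Matrix (Fin n) (Fin n) ℝ) (c : Fin k → ℝ)
    (v : Fin n → ℝ) : ℝ :=
  fFun A c v / edot v v

/-- The Toh matrix `A(ω, ε)`. -/
noncomputable def tohMatrix (ω ε : ℝ) : Matrix (Fin 4) (Fin 4) ℝ :=
  !![1, ε, 0, 0; 0, -1, ω / ε, 0; 0, 0, 1, ε; 0, 0, 0, -1]

/-- `p` is a `k`-th worst-case GMRES polynomial of `A`. -/
def IsWCPoly {ι : Type*} [Fintype ι] [DecidableEq ι]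
    (A : Matrix ι ι ℝ) (k : ℕ) (p : Polynomial ℝ) : Prop :=
  IsPik k p ∧ ∃ b : ι → ℝ, euclNorm b = 1 ∧
    (∀ q : Polynomial ℝ, IsPik k q →
      euclNorm ((Polynomial.aeval A p).mulVec b) ≤ euclNorm ((Polynomial.aeval A q).mulVec b)) ∧
    euclNorm ((Polynomial.aeval A p).mulVec b) = Psi A k

/-- The spectral (Euclidean operator) norm of a real matrix. -/
noncomputable def specNorm {ι : Type*} [Fintype ι] (M : Matrix ι ι ℝ) : ℝ :=
  sSup {r : ℝ | ∃ v : ι → ℝ, euclNorm v = 1 ∧ r = euclNorm (M *ᵥ v)}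

/-- The `k`-th ideal GMRES approximation `φ_k(A) = min_{p ∈ π_k} ‖p(A)‖`. -/
noncomputable def phiIdeal {ι : Type*} [Fintype ι] [DecidableEq ι]
    (A : Matrix ι ι ℝ) (k : ℕ) : ℝ :=
  sInf {r : ℝ | ∃ p : Polynomial ℝ, IsPik k p ∧ r = specNorm (Polynomial.aeval A p)}

/-- Complexification of a real matrix. -/
noncomputable def matC {ι : Type*} (A : Matrix ι ι ℝ) : Matrix ι ι ℂ :=
  A.map fun x => (x : ℂ)

/-- Complexification of a real vector. -/
noncomputable def vecC {ι : Type*} (b : ι → ℝ) : ι → ℂ := fun i => (b i : ℂ)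

/-- `Ψ_{k,ℂ,ℝ}(A)`: complex polynomials, real initial vectors. -/
noncomputable def PsiCR {ι : Type*} [Fintype ι] [DecidableEq ι]
    (A : Matrix ι ι ℝ) (k : ℕ) : ℝ :=
  sSup {r : ℝ | ∃ b : ι → ℝ, euclNorm b = 1 ∧
    r = sInf {s : ℝ | ∃ p : Polynomial ℂ, IsPikC k p ∧
      s = euclNormC ((Polynomial.aeval (matC A) p).mulVec (vecC b))}}

/-- `Ψ_{k,ℂ,ℂ}(A)`: complex polynomials, complex initial vectors. -/
noncomputable def PsiCC {ι : Type*} [Fintype ι] [DecidableEq ι]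
    (A : Matrix ι ι ℝ) (k : ℕ) : ℝ :=
  sSup {r : ℝ | ∃ b : ι → ℂ, euclNormC b = 1 ∧
    r = sInf {s : ℝ | ∃ p : Polynomial ℂ, IsPikC k p ∧
      s = euclNormC ((Polynomial.aeval (matC A) p).mulVec b)}}

/-- `Ψ_{k,ℝ,ℂ}(A)`: real polynomials, complex initial vectors. -/
noncomputable def PsiRC {ι : Type*} [Fintype ι] [DecidableEq ι]
    (A : Matrix ι ι ℝ) (k : ℕ) : ℝ :=
  sSup {r : ℝ | ∃ b : ι → ℂ, euclNormC b = 1 ∧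
    r = sInf {s : ℝ | ∃ p : Polynomial ℝ, IsPik k p ∧
      s = euclNormC ((Polynomial.aeval (matC A) (p.map (algebraMap ℝ ℂ))).mulVec b)}}

/-- `φ_{k,ℝ,ℝ}(A)`. -/
noncomputable def phiRR {ι : Type*} [Fintype ι] [DecidableEq ι]
    (A : Matrix ι ι ℝ) (k : ℕ) : ℝ :=
  sInf {r : ℝ | ∃ p : Polynomial ℝ, IsPik k p ∧
    r = sSup {s : ℝ | ∃ b : ι → ℝ, euclNorm b = 1 ∧
      s = euclNorm ((Polynomial.aeval A p).mulVec b)}}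

/-- `φ_{k,ℂ,ℝ}(A)`. -/
noncomputable def phiCR {ι : Type*} [Fintype ι] [DecidableEq ι]
    (A : Matrix ι ι ℝ) (k : ℕ) : ℝ :=
  sInf {r : ℝ | ∃ p : Polynomial ℂ, IsPikC k p ∧
    r = sSup {s : ℝ | ∃ b : ι → ℝ, euclNorm b = 1 ∧
      s = euclNormC ((Polynomial.aeval (matC A) p).mulVec (vecC b))}}

/-- `φ_{k,ℝ,ℂ}(A)`. -/
noncomputable def phiRC {ι : Type*} [Fintype ι] [DecidableEq ι]
    (A : Matrix ι ι ℝ) (k : ℕ) : ℝ :=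
  sInf {r : ℝ | ∃ p : Polynomial ℝ, IsPik k p ∧
    r = sSup {s : ℝ | ∃ b : ι → ℂ, euclNormC b = 1 ∧
      s = euclNormC ((Polynomial.aeval (matC A) (p.map (algebraMap ℝ ℂ))).mulVec b)}}

/-- `φ_{k,ℂ,ℂ}(A)`. -/
noncomputable def phiCC {ι : Type*} [Fintype ι] [DecidableEq ι]
    (A : Matrix ι ι ℝ) (k : ℕ) : ℝ :=
  sInf {r : ℝ | ∃ p : Polynomial ℂ, IsPikC k p ∧
    r = sSup {s : ℝ | ∃ b : ι → ℂ, euclNormC b = 1 ∧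
      s = euclNormC ((Polynomial.aeval (matC A) p).mulVec b)}}

lemma euclNorm_eq_dot {n : ℕ} (v : Fin n → ℝ) : euclNorm v = Real.sqrt (v ⬝ᵥ v) := by
  simp [euclNorm, dotProduct, sq]

lemma euclNorm_sq' {n : ℕ} (v : Fin n → ℝ) : euclNorm v ^ 2 = v ⬝ᵥ v := by
  rw [euclNorm_eq_dot, Real.sq_sqrt]
  simpa using dotProduct_star_self_nonneg v

lemma euclNorm_nonneg' {n : ℕ} (v : Fin n → ℝ) : 0 ≤ euclNorm v := Real.sqrt_nonneg _

lemma euclNorm_eq_norm {n : ℕ} (v : Fin n → ℝ) : euclNorm v = ‖WithLp.toLp 2 v‖ := by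
  simp [euclNorm, EuclideanSpace.norm_eq]

lemma euclNorm_smul' {n : ℕ} (a : ℝ) (v : Fin n → ℝ) :
    euclNorm (a • v) = |a| * euclNorm v := by
  rw [euclNorm_eq_norm, euclNorm_eq_norm, WithLp.toLp_smul, norm_smul, Real.norm_eq_abs]

lemma dot_le_euclNorm {n : ℕ} (u v : Fin n → ℝ) : u ⬝ᵥ v ≤ euclNorm u * euclNorm v := by
  have h : (u ⬝ᵥ v) ^ 2 ≤ (euclNorm u * euclNorm v) ^ 2 := by
    rw [mul_pow, euclNorm_sq', euclNorm_sq']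
    have := Finset.sum_mul_sq_le_sq_mul_sq Finset.univ u v
    simpa [dotProduct, sq] using this
  exact le_of_sq_le_sq' h (mul_nonneg (euclNorm_nonneg' u) (euclNorm_nonneg' v))
where
  le_of_sq_le_sq' {a b : ℝ} (h : a ^ 2 ≤ b ^ 2) (hb : 0 ≤ b) : a ≤ b :=
    (le_abs_self a).trans (abs_le_of_sq_le_sq h hb)

lemma aeval_transpose' {n : ℕ} (A : Matrix (Fin n) (Fin n) ℝ) (q : Polynomial ℝ) :
    Polynomial.aeval Aᵀ q = (Polynomial.aeval A q)ᵀ := by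
  induction q using Polynomial.induction_on' with
  | add p q hp hq => simp [hp, hq]
  | monomial k a =>
    simp [Polynomial.aeval_monomial, Algebra.algebraMap_eq_smul_one, Matrix.transpose_pow]

/-- Galerkin orthogonality. -/
lemma gmres_orth {n : ℕ} (A : Matrix (Fin n) (Fin n) ℝ) (k : ℕ) (b r : Fin n → ℝ)
    (hr : IsGmresRes A k b r) (q : Polynomial ℝ) (hq : q.natDegree ≤ k) (hq0 : q.eval 0 = 0) :
    r ⬝ᵥ ((Polynomial.aeval A q).mulVec b) = 0 := by
  obtain ⟨p, hp, rfl, hmin⟩ := hr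
  set r := (Polynomial.aeval A p).mulVec b with hrdef
  set w := (Polynomial.aeval A q).mulVec b with hw
  have key : ∀ t : ℝ, 0 ≤ 2 * t * (r ⬝ᵥ w) + t ^ 2 * (w ⬝ᵥ w) := by
    intro t
    have h1 := hmin (p + Polynomial.C t * q) ⟨?_, ?_⟩
    · have h2 : (Polynomial.aeval A (p + Polynomial.C t * q)).mulVec b = r + t • w := by
        rw [hrdef, hw, map_add, Matrix.add_mulVec, ← Polynomial.smul_eq_C_mul, map_smul,
          Matrix.smul_mulVec]
      rw [h2] at h1
      have h3 := pow_le_pow_left₀ (euclNorm_nonneg' _) h1 2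
      rw [euclNorm_sq', euclNorm_sq'] at h3
      simp only [dotProduct_add, add_dotProduct, smul_dotProduct, dotProduct_smul,
        smul_eq_mul, dotProduct_comm w r] at h3
      nlinarith
    · refine (Polynomial.natDegree_add_le _ _).trans (max_le hp.1 ?_)
      exact (Polynomial.natDegree_C_mul_le _ _).trans hq
    · simp [hp.2, hq0]
  have hww : 0 ≤ w ⬝ᵥ w := by rw [← euclNorm_sq']; positivity
  have h1 := key (-(r ⬝ᵥ w) / (w ⬝ᵥ w + 1))
  have h2 : (2 * (-(r ⬝ᵥ w) / (w ⬝ᵥ w + 1)) * (r ⬝ᵥ w) +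
      (-(r ⬝ᵥ w) / (w ⬝ᵥ w + 1)) ^ 2 * (w ⬝ᵥ w)) * (w ⬝ᵥ w + 1) ^ 2
      = - ((r ⬝ᵥ w) ^ 2 * (w ⬝ᵥ w + 2)) := by
    field_simp
    ring
  have h3 := mul_nonneg h1 (sq_nonneg (w ⬝ᵥ w + 1))
  rw [h2] at h3
  have h4 : (r ⬝ᵥ w) ^ 2 ≤ 0 := by nlinarith [sq_nonneg (r ⬝ᵥ w)]
  exact pow_eq_zero_iff (two_ne_zero) |>.1 (le_antisymm h4 (sq_nonneg _))

lemma gmres_dot {n : ℕ} (A : Matrix (Fin n) (Fin n) ℝ) (k : ℕ) (b r : Fin n → ℝ)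
    (hr : IsGmresRes A k b r) (q : Polynomial ℝ) (hq : IsPik k q) :
    ((Polynomial.aeval Aᵀ q).mulVec r) ⬝ᵥ b = r ⬝ᵥ r := by
  have hr' := hr
  obtain ⟨p, hp, hrp, hmin⟩ := hr'
  have h := gmres_orth A k b r hr (q - p)
    ((Polynomial.natDegree_sub_le _ _).trans (max_le hq.1 hp.1)) (by simp [hq.2, hp.2])
  rw [map_sub, Matrix.sub_mulVec, ← hrp, dotProduct_sub, sub_eq_zero] at h
  rw [aeval_transpose', ← h, Matrix.mulVec_transpose, Matrix.dotProduct_mulVec]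

lemma gmresVal_bddBelow {n : ℕ} (A : Matrix (Fin n) (Fin n) ℝ) (k : ℕ) (v : Fin n → ℝ) :
    BddBelow {s : ℝ | ∃ p : Polynomial ℝ, IsPik k p ∧
      s = euclNorm ((Polynomial.aeval A p).mulVec v)} :=
  ⟨0, by rintro _ ⟨p, _, rfl⟩; exact euclNorm_nonneg' _⟩

lemma isPik_one (k : ℕ) : IsPik k 1 := ⟨by simp, by simp⟩

lemma gmresVal_le_Psi {n : ℕ} (A : Matrix (Fin n) (Fin n) ℝ) (k : ℕ) (v : Fin n → ℝ)
    (hv : euclNorm v = 1) : gmresVal A k v ≤ Psi A k := by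
  refine le_csSup ⟨1, ?_⟩ ⟨v, hv, rfl⟩
  rintro _ ⟨u, hu, rfl⟩
  exact csInf_le (gmresVal_bddBelow A k u) ⟨1, isPik_one k, by simp [hu]⟩

lemma le_gmresVal {n : ℕ} (A : Matrix (Fin n) (Fin n) ℝ) (k : ℕ) (v : Fin n → ℝ) (c : ℝ)
    (h : ∀ q, IsPik k q → c ≤ euclNorm ((Polynomial.aeval A q).mulVec v)) :
    c ≤ gmresVal A k v := by
  refine le_csInf ⟨_, 1, isPik_one k, rfl⟩ ?_
  rintro _ ⟨p, hp, rfl⟩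
  exact h p hp

/-- A vector whose annihilator is generated by the minimal polynomial. -/
lemma exists_max_vec {n : ℕ} (A : Matrix (Fin n) (Fin n) ℝ) :
    ∃ v : Fin n → ℝ, ∀ q : Polynomial ℝ, (Polynomial.aeval A q).mulVec v = 0 →
      Polynomial.aeval A q = 0 := by
  obtain ⟨x, hx⟩ := Module.exists_ker_toSpanSingleton_eq_annihilator ℝ[X]
    (Module.AEval' (Matrix.toLin' A))
  obtain ⟨v, rfl⟩ := (Module.AEval'.of (Matrix.toLin' A)).surjective x
  have haux : ∀ q : ℝ[X], Polynomial.aeval (Matrix.toLin' A) q =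
      Matrix.toLin' (Polynomial.aeval A q) := fun q =>
    Polynomial.aeval_algHom_apply (Matrix.toLinAlgEquiv' (R := ℝ) (n := Fin n)).toAlgHom A q
  refine ⟨v, fun q hq => ?_⟩
  have hmem : q ∈ LinearMap.ker (LinearMap.toSpanSingleton ℝ[X] _
      (Module.AEval'.of (Matrix.toLin' A) v)) := by
    rw [LinearMap.mem_ker, LinearMap.toSpanSingleton_apply, ← Module.AEval.of_aeval_smul, haux]
    simpa using hq
  rw [hx, Module.AEval.annihilator_eq_ker_aeval, RingHom.mem_ker] at hmem
  have hmem' : Polynomial.aeval (Matrix.toLin' A) q = 0 := hmem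
  rw [haux] at hmem'
  simpa using hmem'

lemma Psi_pos {n : ℕ} (A : Matrix (Fin n) (Fin n) ℝ) (k : ℕ) (hk1 : 1 ≤ k)
    (hk2 : k ≤ dA A - 1) : 0 < Psi A k := by
  obtain ⟨v, hv⟩ := exists_max_vec A
  have hne : ∀ q, IsPik k q → (Polynomial.aeval A q).mulVec v ≠ 0 := by
    intro q hq h0
    have hq0 : q ≠ 0 := by rintro rfl; simpa using hq.2
    have := Polynomial.natDegree_le_of_dvd (minpoly.dvd ℝ A (hv q h0)) hq0
    have := hq.1
    unfold dA at hk2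
    omega
  have hv0 : v ≠ 0 := by
    rintro rfl
    exact hne 1 (isPik_one k) (by simp)
  have hvn : 0 < euclNorm v := by
    rw [euclNorm_eq_norm, norm_pos_iff]
    simpa using hv0
  set u := (euclNorm v)⁻¹ • v with hu
  have hun : euclNorm u = 1 := by
    rw [hu, euclNorm_smul', abs_of_pos (inv_pos.2 hvn), inv_mul_cancel₀ hvn.ne']
  refine lt_of_lt_of_le ?_ (gmresVal_le_Psi A k u hun)
  let φ : ℝ[X] →ₗ[ℝ] EuclideanSpace ℝ (Fin n) :=
    { toFun := fun q => WithLp.toLp 2 ((Polynomial.aeval A q).mulVec u)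
      map_add' := fun p q => by simp [Matrix.add_mulVec]
      map_smul' := fun a q => by simp [Matrix.smul_mulVec] }
  let P : Submodule ℝ ℝ[X] := Polynomial.degreeLE ℝ k ⊓ LinearMap.ker (Polynomial.leval (0 : ℝ))
  let K := P.map φ
  have hP : ∀ q, IsPik k q → q - 1 ∈ P := by
    intro q hq
    refine ⟨?_, ?_⟩
    · rw [SetLike.mem_coe, Polynomial.mem_degreeLE, ← Polynomial.natDegree_le_iff_degree_le]
      exact (Polynomial.natDegree_sub_le _ _).trans (max_le hq.1 (by simp))
    · simp [hq.2, Polynomial.leval]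
  have hnot : -WithLp.toLp 2 u ∉ (K : Set (EuclideanSpace ℝ (Fin n))) := by
    rintro ⟨q, ⟨hq1, hq2⟩, hq⟩
    rw [SetLike.mem_coe, Polynomial.mem_degreeLE, ← Polynomial.natDegree_le_iff_degree_le] at hq1
    have hq2' : q.eval 0 = 0 := hq2
    have hq' : WithLp.toLp 2 ((Polynomial.aeval A q).mulVec u) = - WithLp.toLp 2 u := hq
    have h1 : (Polynomial.aeval A q).mulVec u = -u := by
      rw [← WithLp.toLp_neg] at hq'
      exact WithLp.toLp_injective 2 hq'
    refine hne (q + 1) ⟨(Polynomial.natDegree_add_le _ _).trans (max_le hq1 (by simp)),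
      by simp [hq2']⟩ ?_
    have h2 : (Polynomial.aeval A (q + 1)).mulVec u = 0 := by
      simp [Matrix.add_mulVec, h1]
    rw [hu, Matrix.mulVec_smul] at h2
    exact (smul_eq_zero.1 h2).resolve_left (inv_ne_zero hvn.ne')
  have hclosed : IsClosed (K : Set (EuclideanSpace ℝ (Fin n))) := K.closed_of_finiteDimensional
  have hpos : 0 < Metric.infDist (-WithLp.toLp 2 u) (K : Set (EuclideanSpace ℝ (Fin n))) :=
    (hclosed.notMem_iff_infDist_pos ⟨0, K.zero_mem⟩).1 hnot
  refine lt_of_lt_of_le hpos (le_gmresVal A k u _ fun q hq => ?_)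
  refine (Metric.infDist_le_dist_of_mem (Submodule.mem_map_of_mem (hP q hq))).trans (le_of_eq ?_)
  have h3 : φ (q - 1) = WithLp.toLp 2 ((Polynomial.aeval A q).mulVec u) - WithLp.toLp 2 u := by
    simp [φ, Matrix.sub_mulVec]
  rw [h3, euclNorm_eq_norm, dist_comm, dist_eq_norm]
  congr 1
  abel

/-- If `b` is a unit norm `k`-th worst-case GMRES initial vector,
`r = GMRES(A,b,k)` and `s = GMRES(Aᵀ, r/‖r‖, k)`, then
`‖s‖ = ‖r‖ = Ψ_k(A)` and `b = s/Ψ_k(A)`. -/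
theorem worst_case_cross_equality {n : ℕ} (A : Matrix (Fin n) (Fin n) ℝ)
    (hA : IsUnit A) (k : ℕ) (hk1 : 1 ≤ k) (hk2 : k ≤ dA A - 1)
    (b r s : Fin n → ℝ) (hb : euclNorm b = 1)
    (hr : IsGmresRes A k b r) (hwc : euclNorm r = Psi A k)
    (hs : IsGmresRes Aᵀ k ((euclNorm r)⁻¹ • r) s) :
    euclNorm s = euclNorm r ∧ euclNorm r = Psi A k ∧ b = (Psi A k)⁻¹ • s := by
  have hR : 0 < euclNorm r := hwc ▸ Psi_pos A k hk1 hk2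
  have hr2 := euclNorm_sq' r
  set ρ := euclNorm r with hρ
  set c := ρ⁻¹ • r with hc
  have hcn : euclNorm c = 1 := by
    rw [hc, euclNorm_smul', abs_of_pos (inv_pos.2 hR), inv_mul_cancel₀ hR.ne']
  have hsb : s ⬝ᵥ b = ρ := by
    obtain ⟨q, hq, hsq, -⟩ := hs
    rw [hsq, hc, Matrix.mulVec_smul, smul_dotProduct, gmres_dot A k b r hr q hq, ← hr2,
      smul_eq_mul]
    field_simp
  have hle1 : ρ ≤ euclNorm s := by
    have := dot_le_euclNorm s b
    rwa [hsb, hb, mul_one] at this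
  have hS : 0 < euclNorm s := hR.trans_le hle1
  have hle2 : euclNorm s ≤ ρ := by
    rw [hwc]
    have hun : euclNorm ((euclNorm s)⁻¹ • s) = 1 := by
      rw [euclNorm_smul', abs_of_pos (inv_pos.2 hS), inv_mul_cancel₀ hS.ne']
    refine le_trans (le_gmresVal A k _ _ fun q hq => ?_) (gmresVal_le_Psi A k _ hun)
    have h1 := gmres_dot Aᵀ k c s hs q hq
    rw [Matrix.transpose_transpose, ← euclNorm_sq'] at h1
    have h2 := dot_le_euclNorm ((Polynomial.aeval A q).mulVec s) c
    rw [h1, hcn, mul_one] at h2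
    rw [Matrix.mulVec_smul, euclNorm_smul', abs_of_pos (inv_pos.2 hS)]
    rw [inv_mul_eq_div, le_div_iff₀ hS]
    nlinarith
  have heq : euclNorm s = ρ := le_antisymm hle2 hle1
  refine ⟨heq, hwc, ?_⟩
  rw [← hwc]
  have hz : (s - ρ • b) ⬝ᵥ (s - ρ • b) = 0 := by
    simp only [dotProduct_sub, sub_dotProduct, smul_dotProduct, dotProduct_smul,
      smul_eq_mul, dotProduct_comm b s, hsb]
    rw [← euclNorm_sq', ← euclNorm_sq', heq, hb]
    ring
  have h0 : s - ρ • b = 0 := dotProduct_self_eq_zero.1 hz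
  rw [sub_eq_zero.1 h0, smul_smul, inv_mul_cancel₀ hR.ne', one_smul]
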